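/- arXiv:2411.13442 — 3 statements merged into one kernel-verified Lean document; each statement's English description precedes it below -/
import Mathlib

section
/- Fix y > 0 and let g : ℝ → ℝ satisfy g(p) ∈ (0,1) and ∫_0^{g(p)} (1-t^p)^{-2/p} dt = y for every p > 1. Then the function p ↦ log g(p) is concave on the interval (1,∞). In other words, p ↦ tamh_{p',p}(y), where p' = p/(p-1) is the conjugate exponent, is logarithmically concave on (1,∞). -/
open MeasureTheory

/-!
Let `m ≥ 0` (the theorem is the case `m = 2`). Rescaling `t = exp u * s` in the integral of
`(1 - t ^ p) ^ (-(m / p))` from `0` to `exp u` turns it into the integral over `s ∈ (0, 1]` of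
`exp (u + m * ψ (p, u + log s))`, where `ψ (p, v) = -log (1 - exp (p * v)) / p`.
Now `ψ` is jointly convex: with `φ z = -log (1 - exp z)` it is the perspective
`(q, v) ↦ q * φ (q⁻¹ * v)` of a convex function, evaluated at `q = p⁻¹`. For `v < 0` that
perspective is increasing in `q`, because `φ` is nonnegative and increasing, and `p⁻¹` is convex
in `p`. Hence the integral is jointly convex in `(p, u)`. It is also strictly increasing in `u`,
so prescribing its value, as a constant or more generally as a concave function of `p`,
determines `u` as a concave function of `p`.
-/

section

open Real Set

section Convexity

variable {E : Type*} [AddCommMonoid E] [Module ℝ E] {s : Set E}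

lemma inv_smul_add_smul {q r a b : ℝ} (hq : q ≠ 0) (hr : r ≠ 0) (x y : E) :
    (a * q + b * r)⁻¹ • (a • x + b • y) =
      (a * q / (a * q + b * r)) • q⁻¹ • x + (b * r / (a * q + b * r)) • r⁻¹ • y := by
  match_scalars <;> field_simp

lemma convex_setOf_inv_smul_mem (hs : Convex ℝ s) :
    Convex ℝ {z : ℝ × E | 0 < z.1 ∧ z.1⁻¹ • z.2 ∈ s} := by
  rintro ⟨q, x⟩ ⟨hq : 0 < q, hx⟩ ⟨r, y⟩ ⟨hr : 0 < r, hy⟩ a b ha hb hab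
  have hqr : 0 < a * q + b * r := convex_Ioi (0 : ℝ) hq hr ha hb hab
  refine ⟨hqr, ?_⟩
  simp only [Prod.smul_mk, Prod.mk_add_mk, smul_eq_mul]
  rw [inv_smul_add_smul hq.ne' hr.ne']
  exact hs hx hy (by positivity) (by positivity) (by rw [← add_div, div_self hqr.ne'])

lemma convexOn_perspective {φ : E → ℝ} (hφ : ConvexOn ℝ s φ) :
    ConvexOn ℝ {z : ℝ × E | 0 < z.1 ∧ z.1⁻¹ • z.2 ∈ s} (fun z ↦ z.1 * φ (z.1⁻¹ • z.2)) := by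
  refine ⟨convex_setOf_inv_smul_mem hφ.1, ?_⟩
  rintro ⟨q, x⟩ ⟨hq : 0 < q, hx⟩ ⟨r, y⟩ ⟨hr : 0 < r, hy⟩ a b ha hb hab
  have hqr : 0 < a * q + b * r := convex_Ioi (0 : ℝ) hq hr ha hb hab
  simp only [Prod.smul_mk, Prod.mk_add_mk, smul_eq_mul]
  rw [inv_smul_add_smul hq.ne' hr.ne']
  calc (a * q + b * r) * φ _
      ≤ (a * q + b * r) * (a * q / (a * q + b * r) * φ (q⁻¹ • x) +
          b * r / (a * q + b * r) * φ (r⁻¹ • y)) := by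
        gcongr
        exact hφ.2 hx hy (by positivity) (by positivity) (by rw [← add_div, div_self hqr.ne'])
    _ = a * (q * φ (q⁻¹ • x)) + b * (r * φ (r⁻¹ • y)) := by field_simp

lemma concaveOn_log_comp {f : E → ℝ} (hf : ConcaveOn ℝ s f) (hpos : ∀ x ∈ s, 0 < f x) :
    ConcaveOn ℝ s (fun x ↦ log (f x)) := by
  refine ⟨hf.1, fun x hx y hy a b ha hb hab ↦ ?_⟩
  calc a • log (f x) + b • log (f y)
      ≤ log (a • f x + b • f y) :=
        strictConcaveOn_log_Ioi.concaveOn.2 (hpos x hx) (hpos y hy) ha hb hab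
    _ ≤ log (f (a • x + b • y)) :=
        log_le_log (convex_Ioi (0 : ℝ) (hpos x hx) (hpos y hy) ha hb hab)
          (hf.2 hx hy ha hb hab)

lemma convexOn_exp_comp {f : E → ℝ} (hf : ConvexOn ℝ s f) :
    ConvexOn ℝ s (fun x ↦ exp (f x)) := by
  refine ⟨hf.1, fun x hx y hy a b ha hb hab ↦ ?_⟩
  calc exp (f (a • x + b • y))
      ≤ exp (a • f x + b • f y) := exp_le_exp.2 (hf.2 hx hy ha hb hab)
    _ ≤ a • exp (f x) + b • exp (f y) :=
        convexOn_exp.2 (mem_univ _) (mem_univ _) ha hb hab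

lemma concaveOn_of_convexOn_of_strictMonoOn {t : Set ℝ} {F : E × ℝ → ℝ} {c h : E → ℝ}
    (hF : ConvexOn ℝ (s ×ˢ t) F) (hmono : ∀ x ∈ s, StrictMonoOn (fun u ↦ F (x, u)) t)
    (hc : ConcaveOn ℝ s c) (hmaps : MapsTo h s t) (hFh : ∀ x ∈ s, F (x, h x) = c x) :
    ConcaveOn ℝ s h := by
  refine ⟨hc.1, fun x hx y hy a b ha hb hab ↦ ?_⟩
  have hx' : (x, h x) ∈ s ×ˢ t := ⟨hx, hmaps hx⟩
  have hy' : (y, h y) ∈ s ×ˢ t := ⟨hy, hmaps hy⟩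
  have hz : a • x + b • y ∈ s := hc.1 hx hy ha hb hab
  have hu : a • h x + b • h y ∈ t := (hF.1 hx' hy' ha hb hab).2
  refine ((hmono _ hz).le_iff_le hu (hmaps hz)).1 ?_
  calc F (a • x + b • y, a • h x + b • h y)
      ≤ a • F (x, h x) + b • F (y, h y) := hF.2 hx' hy' ha hb hab
    _ = a • c x + b • c y := by rw [hFh x hx, hFh y hy]
    _ ≤ c (a • x + b • y) := hc.2 hx hy ha hb hab
    _ = F (a • x + b • y, h (a • x + b • y)) := (hFh _ hz).symm

end Convexity

lemma convexOn_comp_mul_div {φ : ℝ → ℝ} (hconv : ConvexOn ℝ (Iio 0) φ)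
    (hmono : MonotoneOn φ (Iio 0)) (hnonneg : ∀ z ∈ Iio 0, 0 ≤ φ z) :
    ConvexOn ℝ (Ioi 0 ×ˢ Iio 0) (fun z : ℝ × ℝ ↦ φ (z.1 * z.2) / z.1) := by
  refine ⟨(convex_Ioi 0).prod (convex_Iio 0), ?_⟩
  rintro ⟨p₁, v₁⟩ ⟨hp₁ : 0 < p₁, hv₁ : v₁ < 0⟩ ⟨p₂, v₂⟩ ⟨hp₂ : 0 < p₂, hv₂ : v₂ < 0⟩ a b ha hb hab
  have hp : 0 < a * p₁ + b * p₂ := convex_Ioi (0 : ℝ) hp₁ hp₂ ha hb hab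
  have hv : a * v₁ + b * v₂ < 0 := convex_Iio (0 : ℝ) hv₁ hv₂ ha hb hab
  have hinv : (a * p₁ + b * p₂)⁻¹ ≤ a * p₁⁻¹ + b * p₂⁻¹ := by
    simpa using (convexOn_zpow (-1)).2 hp₁ hp₂ ha hb hab
  have hq : 0 < a * p₁⁻¹ + b * p₂⁻¹ := (inv_pos.2 hp).trans_le hinv
  have harg : (a * p₁ + b * p₂) * (a * v₁ + b * v₂) ≤
      (a * p₁⁻¹ + b * p₂⁻¹)⁻¹ * (a * v₁ + b * v₂) :=
    mul_le_mul_of_nonpos_right (inv_le_of_inv_le₀ hp hinv) hv.le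
  have hneg := mul_neg_of_pos_of_neg hp hv
  have mem_domain {p v : ℝ} (hp : 0 < p) (hv : v < 0) :
      (p⁻¹, v) ∈ {z : ℝ × ℝ | 0 < z.1 ∧ z.1⁻¹ • z.2 ∈ Iio (0 : ℝ)} :=
    ⟨inv_pos.2 hp, by simpa using mul_neg_of_pos_of_neg hp hv⟩
  calc φ ((a * p₁ + b * p₂) * (a * v₁ + b * v₂)) / (a * p₁ + b * p₂)
      = (a * p₁ + b * p₂)⁻¹ * φ ((a * p₁ + b * p₂) * (a * v₁ + b * v₂)) := div_eq_inv_mul _ _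
    _ ≤ (a * p₁⁻¹ + b * p₂⁻¹) * φ ((a * p₁⁻¹ + b * p₂⁻¹)⁻¹ * (a * v₁ + b * v₂)) :=
        mul_le_mul hinv (hmono hneg (mul_neg_of_pos_of_neg (inv_pos.2 hq) hv) harg)
          (hnonneg _ hneg) hq.le
    _ ≤ a * (p₁⁻¹ * φ (p₁⁻¹⁻¹ * v₁)) + b * (p₂⁻¹ * φ (p₂⁻¹⁻¹ * v₂)) :=
        (convexOn_perspective hconv).2 (mem_domain hp₁ hv₁) (mem_domain hp₂ hv₂) ha hb hab
    _ = a * (φ (p₁ * v₁) / p₁) + b * (φ (p₂ * v₂) / p₂) := by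
        simp only [inv_inv, div_eq_inv_mul]

lemma convexOn_neg_log_one_sub_exp : ConvexOn ℝ (Iio 0) (fun z ↦ -log (1 - exp z)) := by
  have hconc : ConcaveOn ℝ (Iio 0) (fun z ↦ 1 - exp z) :=
    (concaveOn_const 1 (convex_Iio 0)).sub (convexOn_exp.subset (subset_univ _) (convex_Iio 0))
  exact (concaveOn_log_comp hconc fun z hz ↦ sub_pos.2 (exp_lt_one_iff.2 hz)).neg

lemma monotoneOn_neg_log_one_sub_exp : MonotoneOn (fun z ↦ -log (1 - exp z)) (Iio 0) :=
  fun _ _ _ hw hzw ↦ neg_le_neg <|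
    log_le_log (sub_pos.2 (exp_lt_one_iff.2 hw)) (sub_le_sub_left (exp_le_exp.2 hzw) 1)

lemma neg_log_one_sub_exp_nonneg {z : ℝ} (hz : z < 0) : 0 ≤ -log (1 - exp z) :=
  neg_nonneg.2 <| log_nonpos (sub_pos.2 (exp_lt_one_iff.2 hz)).le (sub_le_self 1 (exp_pos z).le)

lemma convexOn_neg_log_one_sub_exp_mul_div :
    ConvexOn ℝ (Ioi 0 ×ˢ Iio 0) (fun z : ℝ × ℝ ↦ -log (1 - exp (z.1 * z.2)) / z.1) :=
  convexOn_comp_mul_div convexOn_neg_log_one_sub_exp monotoneOn_neg_log_one_sub_exp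
    fun _ ↦ neg_log_one_sub_exp_nonneg

lemma one_sub_rpow_pos {p t : ℝ} (hp : 0 < p) (ht₀ : 0 ≤ t) (ht₁ : t < 1) : 0 < 1 - t ^ p :=
  sub_pos.2 (rpow_lt_one ht₀ ht₁ hp)

lemma one_sub_exp_rpow_rpow {p v : ℝ} (m : ℝ) (hp : 0 < p) (hv : v < 0) :
    (1 - exp v ^ p) ^ (-(m / p)) = exp (m * (-log (1 - exp (p * v)) / p)) := by
  rw [rpow_def_of_pos (one_sub_rpow_pos hp (exp_pos v).le (exp_lt_one_iff.2 hv)), ← exp_mul,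
    mul_comm v]
  ring_nf

/-- The inverse generalized hyperbolic function whose convexity properties govern its inverse,
the generalized `tamh`. The exponent is `m / p` with a free numerator `m`: the function
`arctamh_{p',p}` with conjugate parameters is `arctamh 2 p`. -/
noncomputable def arctamh (m p x : ℝ) : ℝ := ∫ t in (0 : ℝ)..x, (1 - t ^ p) ^ (-(m / p))

lemma continuousOn_one_sub_rpow_rpow {p : ℝ} (hp : 0 < p) (r : ℝ) :
    ContinuousOn (fun t : ℝ ↦ (1 - t ^ p) ^ r) (Ico 0 1) :=
  (continuous_const.sub (continuous_rpow_const hp.le)).continuousOn.rpow_const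
    fun _ ht ↦ .inl (one_sub_rpow_pos hp ht.1 ht.2).ne'

lemma strictMonoOn_arctamh (m : ℝ) {p : ℝ} (hp : 0 < p) : StrictMonoOn (arctamh m p) (Ico 0 1) := by
  intro x hx z hz hxz
  have integrable {c d : ℝ} (hc : c ∈ Ico (0 : ℝ) 1) (hd : d ∈ Ico (0 : ℝ) 1) :
      IntervalIntegrable (fun t : ℝ ↦ (1 - t ^ p) ^ (-(m / p))) volume c d :=
    (continuousOn_one_sub_rpow_rpow hp _).mono (ordConnected_Ico.uIcc_subset hc hd)
      |>.intervalIntegrable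
  have h0 : (0 : ℝ) ∈ Ico (0 : ℝ) 1 := ⟨le_rfl, zero_lt_one⟩
  rw [← sub_pos, arctamh, arctamh,
    intervalIntegral.integral_interval_sub_left (integrable h0 hz) (integrable h0 hx)]
  exact intervalIntegral.intervalIntegral_pos_of_pos_on (integrable hx hz)
    (fun t ht ↦ rpow_pos_of_pos
      (one_sub_rpow_pos hp (hx.1.trans ht.1.le) (ht.2.trans hz.2)) _) hxz

lemma arctamh_eq_integral_Ioc (m p x : ℝ) :
    arctamh m p x = ∫ s in Ioc (0 : ℝ) 1, x * (1 - (x * s) ^ p) ^ (-(m / p)) := by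
  rw [← intervalIntegral.integral_of_le zero_le_one, intervalIntegral.integral_const_mul,
    intervalIntegral.mul_integral_comp_mul_left (f := fun t ↦ (1 - t ^ p) ^ (-(m / p))),
    mul_zero, mul_one, arctamh]

lemma integrableOn_mul_one_sub_mul_rpow_rpow {p x : ℝ} (hp : 0 < p) (hx : x ∈ Ico (0 : ℝ) 1)
    (r : ℝ) : IntegrableOn (fun s ↦ x * (1 - (x * s) ^ p) ^ r) (Ioc 0 1) := by
  have hmaps : MapsTo (fun s ↦ x * s) (Icc 0 1) (Ico (0 : ℝ) 1) := fun s hs ↦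
    ⟨mul_nonneg hx.1 hs.1, (mul_le_of_le_one_right hx.1 hs.2).trans_lt hx.2⟩
  have hcont : ContinuousOn (fun s ↦ x * (1 - (x * s) ^ p) ^ r) (Icc 0 1) :=
    continuousOn_const.mul ((continuousOn_one_sub_rpow_rpow hp r).comp (by fun_prop) hmaps)
  exact hcont.integrableOn_Icc.mono_set Ioc_subset_Icc_self

lemma convexOn_exp_mul_one_sub_exp_mul_rpow_rpow {m s : ℝ} (hm : 0 ≤ m) (hs : s ∈ Ioc (0 : ℝ) 1) :
    ConvexOn ℝ (Ioi 0 ×ˢ Iio 0)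
      (fun z : ℝ × ℝ ↦ exp z.2 * (1 - (exp z.2 * s) ^ z.1) ^ (-(m / z.1))) := by
  have hdom : Convex ℝ (Ioi (0 : ℝ) ×ˢ Iio (0 : ℝ)) := (convex_Ioi 0).prod (convex_Iio 0)
  have hlog : log s ≤ 0 := log_nonpos hs.1.le hs.2
  have hshift : ConvexOn ℝ (Ioi 0 ×ˢ Iio 0)
      (fun z : ℝ × ℝ ↦ -log (1 - exp (z.1 * (z.2 + log s))) / z.1) := by
    refine (convexOn_neg_log_one_sub_exp_mul_div.translate_left (0, log s)).subset ?_ hdom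
      |>.congr ?_
    · exact fun z hz ↦ ⟨by simpa using hz.1, add_neg_of_nonpos_of_neg hlog hz.2⟩
    · intro z _
      simp
  have hsnd : ConvexOn ℝ (Ioi (0 : ℝ) ×ˢ Iio (0 : ℝ)) (fun z : ℝ × ℝ ↦ z.2) :=
    (LinearMap.snd ℝ ℝ ℝ).convexOn hdom
  refine (convexOn_exp_comp (hsnd.add (hshift.smul hm))).congr fun z hz ↦ ?_
  have hv : z.2 + log s < 0 := add_neg_of_neg_of_nonpos hz.2 hlog
  simp only [Pi.add_apply, smul_eq_mul, exp_add]
  rw [← one_sub_exp_rpow_rpow m hz.1 hv, exp_add, exp_log hs.1]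

lemma convexOn_arctamh_exp {m : ℝ} (hm : 0 ≤ m) :
    ConvexOn ℝ (Ioi 0 ×ˢ Iio 0) (fun z : ℝ × ℝ ↦ arctamh m z.1 (exp z.2)) := by
  simp only [arctamh_eq_integral_Ioc]
  refine integral_convexOn_of_integrand_ae ((convex_Ioi 0).prod (convex_Iio 0)) ?_ ?_
  · exact ae_restrict_of_forall_mem measurableSet_Ioc
      fun s hs ↦ convexOn_exp_mul_one_sub_exp_mul_rpow_rpow hm hs
  · exact fun z hz ↦
      integrableOn_mul_one_sub_mul_rpow_rpow hz.1 ⟨(exp_pos _).le, exp_lt_one_iff.2 hz.2⟩ _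

theorem tamh_conjugate_log_concave_general {m : ℝ} (hm : 0 ≤ m) {S : Set ℝ} (hS : S ⊆ Ioi 0)
    {c g : ℝ → ℝ} (hc : ConcaveOn ℝ S c)
    (hg : ∀ p ∈ S, g p ∈ Ioo 0 1 ∧ arctamh m p (g p) = c p) :
    ConcaveOn ℝ S (fun p ↦ log (g p)) := by
  have hF : ConvexOn ℝ (S ×ˢ Iio 0) (fun z : ℝ × ℝ ↦ arctamh m z.1 (exp z.2)) :=
    (convexOn_arctamh_exp hm).subset (prod_mono_left hS) (hc.1.prod (convex_Iio 0))
  have hmono : ∀ p ∈ S, StrictMonoOn (fun u ↦ arctamh m p (exp u)) (Iio 0) := fun p hp ↦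
    (strictMonoOn_arctamh m (hS hp)).comp (exp_strictMono.strictMonoOn _)
      fun u hu ↦ ⟨(exp_pos u).le, exp_lt_one_iff.2 hu⟩
  refine concaveOn_of_convexOn_of_strictMonoOn hF hmono hc ?_ fun p hp ↦ ?_
  · exact fun p hp ↦ log_neg (hg p hp).1.1 (hg p hp).1.2
  · rw [exp_log (hg p hp).1.1, (hg p hp).2]

end

theorem tamh_conjugate_log_concave (y : ℝ) (hy : 0 < y) (g : ℝ → ℝ)
    (hg : ∀ p : ℝ, 1 < p → g p ∈ Set.Ioo (0:ℝ) 1 ∧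
      (∫ t in (0:ℝ)..g p, (1 - t ^ p) ^ (-(2 / p))) = y) :
    ConcaveOn ℝ (Set.Ioi (1:ℝ)) (fun p => Real.log (g p)) :=
  tamh_conjugate_log_concave_general zero_le_two (Set.Ioi_subset_Ioi zero_le_one)
    (concaveOn_const y (convex_Ioi 1)) hg
end

section
/- Fix q > 1 and y > 0, and let g : ℝ → ℝ satisfy g(p) ∈ (0,1) and ∫_0^{g(p)} (1-t^q)^{-1/p} dt = y for every p > 1. Then g is concave on the interval (1,∞). In other words, for each fixed y and q > 1 the function p ↦ sin_{p,q}(y) is concave on (1,∞). -/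
open MeasureTheory

/-!
Write `F (p, x) = ∫₀ˣ exp (L t / p) dt` with `L t = -log (1 - t ^ q)`. Since `F` increases in `x`,
the hypograph of `g` is the sublevel set `{F ≤ y}`, and `g` is concave as soon as `F` is
quasiconvex. Along a line, `F` is quasiconvex if its second derivative is positive at every critical
point. Up to a positive factor that second derivative is
`H (p, x) = M₂ - 2 L M₁ + 2 p M₁ + P M₁² / (p exp (L / p))`, where `Mₙ = ∫₀ˣ Lⁿ exp (L / p)` and
`P = L'`. It vanishes at `x = 0`, and its `x`-derivative is positive as long as `1 ≤ p` and
`L ≤ 2 p`; the latter describes a convex region because `L` is convex.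

The graph of `g` lies in this region: letting `p → ∞` in `F (p, g p) = y` gives `y ≤ 1`, while
`F (p, x) ≤ 1` forces `L x ≤ 2 p`.
-/

open Set Filter Real intervalIntegral Topology

lemma quasiconvexOn_of_hasDerivAt2_pos {D : Set ℝ} (hD : Convex ℝ D) {f f' f'' : ℝ → ℝ}
    (hf : ContinuousOn f D) (hf' : ∀ x ∈ interior D, HasDerivAt f (f' x) x)
    (hf'' : ∀ x ∈ interior D, f' x = 0 → HasDerivAt f' (f'' x) x)
    (hpos : ∀ x ∈ interior D, f' x = 0 → 0 < f'' x) : QuasiconvexOn ℝ D f := by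
  refine quasiconvexOn_iff_le_max.2 ⟨hD, fun x hx y hy a b ha hb hab => ?_⟩
  have hsub : uIcc x y ⊆ D := hD.ordConnected.uIcc_subset hx hy
  obtain ⟨z, hz, hmax⟩ := isCompact_uIcc.exists_isMaxOn nonempty_uIcc (hf.mono hsub)
  refine (hmax (segment_eq_uIcc x y ▸ ⟨a, b, ha, hb, hab, rfl⟩)).trans ?_
  by_contra! hlt
  have hne : ∀ w ∈ ({x, y} : Set ℝ), w ≠ z := by
    rintro w (rfl | rfl) rfl
    exacts [absurd hlt (le_max_left _ _).not_gt, absurd hlt (le_max_right _ _).not_gt]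
  have hzI : uIcc x y ∈ 𝓝 z := Icc_mem_nhds
    (hz.1.lt_of_ne (hne _ (by rcases min_choice x y with h | h <;> simp [h])))
    (hz.2.lt_of_ne' (hne _ (by rcases max_choice x y with h | h <;> simp [h])))
  have hzD : interior D ∈ 𝓝 z := interior_mem_nhds.2 (mem_of_superset hzI hsub)
  have hderiv : deriv f =ᶠ[𝓝 z] f' := mem_of_superset hzD fun r hr => (hf' r hr).deriv
  have hz' := mem_of_mem_nhds hzD
  have hlmax : IsLocalMax f z := hmax.isLocalMax hzI
  have hcrit : f' z = 0 := hlmax.hasDerivAt_eq_zero (hf' z hz')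
  have hderiv2 : deriv (deriv f) z = f'' z := hderiv.deriv_eq.trans (hf'' z hz' hcrit).deriv
  have hlmin : IsLocalMin f z := isLocalMin_of_deriv_deriv_pos
    (hderiv2 ▸ hpos z hz' hcrit) ((hf' z hz').deriv.trans hcrit) (hf' z hz').continuousAt
  have hconst : f =ᶠ[𝓝 z] fun _ => f z := by
    filter_upwards [hlmax, hlmin] with r using le_antisymm
  have hzero : deriv (deriv f) z = 0 := by simpa using hconst.deriv.deriv_eq
  exact (hpos z hz' hcrit).ne' (hderiv2.symm.trans hzero)

section OrderTopology

variable {α β : Type*} [LinearOrder α] [DenselyOrdered α] [TopologicalSpace α] [OrderTopology α]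
  [Preorder β] [TopologicalSpace β] [OrderClosedTopology β] {f h : α → β} {a b : α} {c : β}

lemma le_of_monotoneOn_Ioc (hab : a < b) (hf : MonotoneOn f (Ioc a b))
    (hle : ∀ x ∈ Ioo a b, h x ≤ f x) (hh : Tendsto h (𝓝[>] a) (𝓝 c)) : c ≤ f b := by
  have : (𝓝[>] a).NeBot := nhdsGT_neBot_of_exists_gt ⟨b, hab⟩
  refine le_of_tendsto hh ?_
  filter_upwards [Ioo_mem_nhdsGT hab] with x hx
  exact (hle x hx).trans (hf ⟨hx.1, hx.2.le⟩ ⟨hab, le_rfl⟩ hx.2.le)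

lemma lt_of_strictMonoOn_Ioc (hab : a < b) (hf : StrictMonoOn f (Ioc a b))
    (hle : ∀ x ∈ Ioo a b, h x ≤ f x) (hh : Tendsto h (𝓝[>] a) (𝓝 c)) : c < f b := by
  obtain ⟨m, ham, hmb⟩ := exists_between hab
  have hcm : c ≤ f m := le_of_monotoneOn_Ioc ham
    (hf.monotoneOn.mono (Ioc_subset_Ioc_right hmb.le)) (fun x hx => hle x ⟨hx.1, hx.2.trans hmb⟩) hh
  exact hcm.trans_lt (hf ⟨ham, hmb.le⟩ ⟨hab, le_rfl⟩ hmb)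

end OrderTopology

section Leibniz

variable {E : Type*} [NormedAddCommGroup E] [NormedSpace ℝ E] {f f' : ℝ → ℝ → E}

lemma hasDerivAt_integral_of_continuous (hf : Continuous ↿f) (hf' : Continuous ↿f')
    (hderiv : ∀ s t, HasDerivAt (f · t) (f' s t) s) (a x s : ℝ) :
    HasDerivAt (fun s => ∫ t in a..x, f s t) (∫ t in a..x, f' s t) s := by
  obtain ⟨C, hC⟩ := (isCompact_Icc (a := s - 1) (b := s + 1)).prod
    (isCompact_uIcc (a := a) (b := x)) |>.exists_bound_of_continuousOn hf'.continuousOn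
  have hslice (r : ℝ) : Continuous (f r) := hf.comp (.prodMk_right r)
  refine (hasDerivAt_integral_of_dominated_loc_of_deriv_le (bound := fun _ => C)
    (Icc_mem_nhds (by linarith) (by linarith : s < s + 1))
    (.of_forall fun r => (hslice r).aestronglyMeasurable)
    ((hslice s).intervalIntegrable _ _)
    (hf'.comp (.prodMk_right s)).aestronglyMeasurable
    (.of_forall fun t ht r hr => hC (r, t) ⟨hr, uIoc_subset_uIcc ht⟩)
    intervalIntegrable_const (.of_forall fun t _ r _ => hderiv r t)).2

lemma hasDerivAt_integral_comp_of_continuous [CompleteSpace E]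
    (hf : Continuous ↿f) (hf' : Continuous ↿f')
    (hderiv : ∀ s t, HasDerivAt (f · t) (f' s t) s) (a : ℝ) {X S : ℝ → ℝ} {X' S' r : ℝ}
    (hX : HasDerivAt X X' r) (hS : HasDerivAt S S' r) :
    HasDerivAt (fun r => ∫ t in a..X r, f (S r) t)
      (X' • f (S r) (X r) + S' • ∫ t in a..X r, f' (S r) t) r := by
  have hslice (s : ℝ) : Continuous (f s) := hf.comp (.prodMk_right s)
  have hspan : Continuous (ContinuousLinearMap.toSpanSingleton ℝ : E → ℝ →L[ℝ] E) :=
    (ContinuousLinearMap.toSpanSingletonCLE (𝕜 := ℝ) (E := E)).continuous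
  have hjoint := hasStrictFDerivAt_uncurry_coprod (𝕜 := ℝ) (u := (X r, S r))
    (f := fun x s => ∫ t in a..x, f s t)
    (f₁ := fun x s => .toSpanSingleton ℝ (f s x))
    (f₂ := fun x s => .toSpanSingleton ℝ (∫ t in a..x, f' s t))
    (.of_forall fun v => ((hslice v.2).integral_hasStrictDerivAt a v.1).hasDerivAt.hasFDerivAt)
    (.of_forall fun v =>
      (hasDerivAt_integral_of_continuous hf hf' hderiv a v.1 v.2).hasFDerivAt)
    (hspan.comp (hf.comp continuous_swap)).continuousAt
    (hspan.comp (continuous_parametric_intervalIntegral_of_continuous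
      (f := fun (v : ℝ × ℝ) t => f' v.2 t)
      (hf'.comp ((continuous_snd.comp continuous_fst).prodMk continuous_snd))
      continuous_fst)).continuousAt
  refine (hjoint.hasFDerivAt.comp_hasDerivAt r (hX.prodMk hS)).congr_deriv ?_
  simp [Function.HasUncurry.uncurry]

end Leibniz

/-- The exponential moment `∫₀ˣ L(t)ⁿ exp(L(t) / p) dt` of an exponent `L`. With
`L t = -log (1 - t ^ q)` the zeroth moment is the integral of `(1 - t ^ q) ^ (-1 / p)` that defines
`arcsin_{p,q} x`, and differentiating the `n`-th moment in `p` produces the `(n + 1)`-st. -/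
noncomputable def expMoment (L : ℝ → ℝ) (n : ℕ) (p x : ℝ) : ℝ :=
  ∫ t in (0 : ℝ)..x, L t ^ n * exp (L t / p)

section ExpMoment

variable {L : ℝ → ℝ} {b : ℝ}

lemma expMoment_congr {L₁ L₂ : ℝ → ℝ} {x : ℝ} (h : EqOn L₁ L₂ (uIcc 0 x)) (n : ℕ) (p : ℝ) :
    expMoment L₁ n p x = expMoment L₂ n p x :=
  integral_congr fun t ht => by simp only [h ht]

lemma hasDerivAt_expMoment_of_continuous (hL : Continuous L) (n : ℕ) {X Q : ℝ → ℝ} {X' Q' r : ℝ}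
    (hX : HasDerivAt X X' r) (hQ : HasDerivAt Q Q' r) (hQr : Q r ≠ 0) :
    HasDerivAt (fun r => expMoment L n (Q r) (X r))
      (X' * (L (X r) ^ n * exp (L (X r) / Q r)) -
        Q' / Q r ^ 2 * expMoment L (n + 1) (Q r) (X r)) r := by
  have hderiv (s t : ℝ) : HasDerivAt (fun s => L t ^ n * exp (s * L t))
      (L t ^ (n + 1) * exp (s * L t)) s :=
    ((((hasDerivAt_id s).mul_const (L t)).exp).const_mul (L t ^ n)).congr_deriv
      (by simp only [id]; ring)
  have h := hasDerivAt_integral_comp_of_continuous (by fun_prop) (by fun_prop) hderiv 0 hX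
    (hQ.inv hQr)
  simp only [smul_eq_mul, Pi.inv_apply, inv_mul_eq_div] at h
  refine h.congr_deriv ?_
  rw [expMoment]
  ring

lemma hasDerivAt_expMoment (hL : ContinuousOn L (Ico 0 b)) (n : ℕ) {X Q : ℝ → ℝ} {X' Q' r : ℝ}
    (hX : HasDerivAt X X' r) (hQ : HasDerivAt Q Q' r) (hXr : X r ∈ Ioo 0 b) (hQr : Q r ≠ 0) :
    HasDerivAt (fun r => expMoment L n (Q r) (X r))
      (X' * (L (X r) ^ n * exp (L (X r) / Q r)) -
        Q' / Q r ^ 2 * expMoment L (n + 1) (Q r) (X r)) r := by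
  obtain ⟨c, hXc, hcb⟩ := exists_between hXr.2
  have hc : 0 ≤ c := (hXr.1.trans hXc).le
  let M : ℝ → ℝ := IccExtend hc ((Icc 0 c).domRestrict L)
  have hM : Continuous M := continuous_IccExtend_iff.2
    (hL.mono (Icc_subset_Ico_right hcb)).domRestrict
  have hLM : EqOn L M (Icc 0 c) := fun t ht => (IccExtend_of_mem hc (domRestrict _ L) ht).symm
  have hmoment (k : ℕ) (p : ℝ) {x : ℝ} (hx : x ∈ Ioo 0 c) :
      expMoment L k p x = expMoment M k p x :=
    expMoment_congr (hLM.mono (by rw [uIcc_of_le hx.1.le]; exact Icc_subset_Icc_right hx.2.le)) k p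
  have hXr' : X r ∈ Ioo 0 c := ⟨hXr.1, hXc⟩
  rw [hLM (Ioo_subset_Icc_self hXr'), hmoment (n + 1) (Q r) hXr']
  refine (hasDerivAt_expMoment_of_continuous hM n hX hQ hQr).congr_of_eventuallyEq ?_
  filter_upwards [hX.continuousAt (Ioo_mem_nhds hXr.1 hXc)] with s hs using hmoment n (Q s) hs

lemma hasDerivAt_expMoment_right (hL : ContinuousOn L (Ico 0 b)) (n : ℕ) {p x : ℝ} (hp : p ≠ 0)
    (hx : x ∈ Ioo 0 b) :
    HasDerivAt (expMoment L n p) (L x ^ n * exp (L x / p)) x := by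
  simpa using hasDerivAt_expMoment hL n (hasDerivAt_id x) (hasDerivAt_const x p) hx hp

lemma intervalIntegrable_expMoment (hL : ContinuousOn L (Ico 0 b)) (n : ℕ) (p : ℝ) {x : ℝ}
    (hx : x ∈ Ico 0 b) :
    IntervalIntegrable (fun t => L t ^ n * exp (L t / p)) volume 0 x := by
  have hLx : ContinuousOn L (Icc 0 x) := hL.mono (Icc_subset_Ico_right hx.2)
  exact ContinuousOn.intervalIntegrable_of_Icc hx.1 (by fun_prop)

lemma tendsto_expMoment_zero (hL : ContinuousOn L (Ico 0 b)) (hb : 0 < b) (n : ℕ) (p : ℝ) :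
    Tendsto (expMoment L n p) (𝓝[>] 0) (𝓝 0) := by
  obtain ⟨x, hx0, hxb⟩ := exists_between hb
  have hcont : ContinuousWithinAt (expMoment L n p) (uIcc 0 x) 0 :=
    continuousOn_primitive_interval'
      (intervalIntegrable_expMoment hL n p ⟨hx0.le, hxb⟩) left_mem_uIcc 0 left_mem_uIcc
  have hzero : expMoment L n p 0 = 0 := integral_same
  rw [uIcc_of_le hx0.le, ContinuousWithinAt, hzero] at hcont
  exact hcont.mono_left (nhdsWithin_le_of_mem (Icc_mem_nhdsGT hx0))

lemma strictMonoOn_expMoment_zero (hL : ContinuousOn L (Ico 0 b)) {p : ℝ} (hp : p ≠ 0) :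
    StrictMonoOn (expMoment L 0 p) (Ioo 0 b) :=
  strictMonoOn_of_hasDerivWithinAt_pos (convex_Ioo 0 b)
    (fun x hx => (hasDerivAt_expMoment_right hL 0 hp hx).continuousAt.continuousWithinAt)
    (fun x hx => (hasDerivAt_expMoment_right hL 0 hp (interior_subset hx)).hasDerivWithinAt)
    (fun x _ => by positivity)

end ExpMoment

/-- An exponent on `[0, b)` with derivative `P` and second derivative `R * P ^ 2`, as required of
`L` in the integrals `∫₀ˣ exp(L(t) / p) dt`. The bound `1 ≤ R` says that `exp (-L)` is concave;
the model case is `exp (-L t) = 1 - t ^ q`. -/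
structure IsAdmissibleExponent (L P R : ℝ → ℝ) (b : ℝ) : Prop where
  continuousOn : ContinuousOn L (Ico 0 b)
  map_zero : L 0 = 0
  hasDerivAt : ∀ x ∈ Ioo 0 b, HasDerivAt L (P x) x
  hasDerivAt_deriv : ∀ x ∈ Ioo 0 b, HasDerivAt P (R x * P x ^ 2) x
  deriv_pos : ∀ x ∈ Ioo 0 b, 0 < P x
  one_le : ∀ x ∈ Ioo 0 b, 1 ≤ R x
  monotoneOn_mul : MonotoneOn (fun x => R x * L x) (Ioo 0 b)

/-- The pairs `(p, x)` for which the convexity argument works: the Hessian estimate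
`IsAdmissibleExponent.criticalHessian_pos` needs `1 ≤ p` and `L x ≤ 2 * p`. -/
def admissibleRegion (L : ℝ → ℝ) (b : ℝ) : Set (ℝ × ℝ) :=
  {z | 1 ≤ z.1 ∧ z.2 ∈ Ioo 0 b ∧ L z.2 ≤ 2 * z.1}

/-- The second derivative of `(p, x) ↦ expMoment L 0 p x` along a line in direction `(π, ξ)`, at a
point where the first derivative vanishes, multiplied by `p ^ 4 / π ^ 2`; see
`IsAdmissibleExponent.hasDerivAt_deriv_expMoment_zero_comp`. -/
noncomputable def criticalHessian (L P : ℝ → ℝ) (p x : ℝ) : ℝ :=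
  expMoment L 2 p x - 2 * L x * expMoment L 1 p x + 2 * p * expMoment L 1 p x +
    P x * expMoment L 1 p x ^ 2 / (p * exp (L x / p))

lemma critical_quadratic_pos {l θ r p : ℝ} (hl : 0 < l) (hlp : l ≤ 2 * p) (hp : 1 ≤ p)
    (hr : 1 ≤ r) (hθ : 0 < θ) (hθ_le : r * l ≤ 1 → θ ≤ 1) :
    0 < p * r * l * θ ^ 2 + 2 * p * (1 - θ) - l * (1 - θ) ^ 2 := by
  rcases le_or_gt θ 1 with hθ1 | hθ1
  · have hlin : 0 ≤ (1 - θ) * (2 * p - l * (1 - θ)) :=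
      mul_nonneg (by linarith) (by nlinarith)
    have hquad : 0 < p * r * l * θ ^ 2 := by positivity
    linarith
  · have hrl : 1 < r * l := not_le.1 fun h => hθ1.not_ge (hθ_le h)
    have hl_le : l ≤ p * r * l := le_mul_of_one_le_left hl.le (one_le_mul_of_one_le_of_one_le hp hr)
    have hp_le : p ≤ p * r * l := by
      rw [mul_assoc]; exact le_mul_of_one_le_right (by linarith) hrl.le
    calc 0 < p := by linarith
      _ = l * (θ - 1) ^ 2 + p * (2 * θ - 1) + 2 * p * (1 - θ) - l * (1 - θ) ^ 2 := by ring
      _ ≤ p * r * l * (θ - 1) ^ 2 + p * r * l * (2 * θ - 1) + 2 * p * (1 - θ)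
          - l * (1 - θ) ^ 2 := by gcongr; linarith
      _ = p * r * l * θ ^ 2 + 2 * p * (1 - θ) - l * (1 - θ) ^ 2 := by ring

namespace IsAdmissibleExponent

variable {L P R : ℝ → ℝ} {b : ℝ}

lemma strictMonoOn (h : IsAdmissibleExponent L P R b) : StrictMonoOn L (Ico 0 b) :=
  strictMonoOn_of_hasDerivWithinAt_pos (convex_Ico 0 b) h.continuousOn
    (by simpa only [interior_Ico] using fun x hx => (h.hasDerivAt x hx).hasDerivWithinAt)
    (by simpa only [interior_Ico] using h.deriv_pos)

lemma pos (h : IsAdmissibleExponent L P R b) {x : ℝ} (hx : x ∈ Ioo 0 b) : 0 < L x :=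
  h.map_zero ▸ h.strictMonoOn ⟨le_rfl, hx.1.trans hx.2⟩ (Ioo_subset_Ico_self hx) hx.1

lemma convexOn (h : IsAdmissibleExponent L P R b) : ConvexOn ℝ (Ioo 0 b) L := by
  refine convexOn_of_hasDerivWithinAt2_nonneg (convex_Ioo 0 b)
    (h.continuousOn.mono Ioo_subset_Ico_self)
    (fun x hx => (h.hasDerivAt x (interior_subset hx)).hasDerivWithinAt)
    (fun x hx => (h.hasDerivAt_deriv x (interior_subset hx)).hasDerivWithinAt) fun x hx => ?_
  have hR := h.one_le x (interior_subset hx)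
  positivity

lemma convex_admissibleRegion (h : IsAdmissibleExponent L P R b) :
    Convex ℝ (admissibleRegion L b) := by
  rintro ⟨p, x⟩ ⟨hp, hx, hLx⟩ ⟨r, y⟩ ⟨hr, hy, hLy⟩ α β hα hβ hαβ
  refine ⟨convex_Ici (1 : ℝ) (mem_Ici.2 hp) (mem_Ici.2 hr) hα hβ hαβ,
    convex_Ioo 0 b hx hy hα hβ hαβ, ?_⟩
  calc L (α • x + β • y) ≤ α * L x + β * L y := h.convexOn.2 hx hy hα hβ hαβ
    _ ≤ α * (2 * p) + β * (2 * r) := by gcongr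
    _ = 2 * (α • p + β • r) := by simp only [smul_eq_mul]; ring

lemma expMoment_pos (h : IsAdmissibleExponent L P R b) (n : ℕ) (p : ℝ) {x : ℝ}
    (hx : x ∈ Ioo 0 b) : 0 < expMoment L n p x :=
  intervalIntegral_pos_of_pos_on
    (intervalIntegrable_expMoment h.continuousOn n p (Ioo_subset_Ico_self hx))
    (fun t ht => by have := h.pos ⟨ht.1, ht.2.trans hx.2⟩; positivity) hx.1

lemma hasDerivAt_exp_div (h : IsAdmissibleExponent L P R b) (p : ℝ) {x : ℝ} (hx : x ∈ Ioo 0 b) :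
    HasDerivAt (fun x => exp (L x / p)) (exp (L x / p) * (P x / p)) x :=
  ((h.hasDerivAt x hx).div_const p).exp

-- The difference of the two sides, divided by `P`, has derivative `p * exp (L / p) * (1 - R * L)`.
lemma deriv_mul_expMoment_one_le (h : IsAdmissibleExponent L P R b) {p x : ℝ} (hp : 0 < p)
    (hx : x ∈ Ioo 0 b) (hRL : R x * L x ≤ 1) :
    P x * expMoment L 1 p x ≤ p * L x * exp (L x / p) := by
  have hsub : Ioc 0 x ⊆ Ioo 0 b := Ioc_subset_Ioo_right hx.2
  let D (z : ℝ) : ℝ := p * L z * exp (L z / p) / P z - expMoment L 1 p z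
  have hD (z : ℝ) (hz : z ∈ Ioo 0 b) :
      HasDerivAt D (p * exp (L z / p) * (1 - R z * L z)) z := by
    have hP := (h.deriv_pos z hz).ne'
    refine (((((h.hasDerivAt z hz).const_mul p).mul (h.hasDerivAt_exp_div p hz)).div
      (h.hasDerivAt_deriv z hz) hP).sub
      (hasDerivAt_expMoment_right h.continuousOn 1 hp.ne' hz)).congr_deriv ?_
    simp only [Pi.mul_apply]
    field_simp
    ring
  have hmono : MonotoneOn D (Ioc 0 x) := monotoneOn_of_hasDerivWithinAt_nonneg (convex_Ioc 0 x)
    (fun z hz => (hD z (hsub hz)).continuousAt.continuousWithinAt)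
    (fun z hz => (hD z (hsub (interior_subset hz))).hasDerivWithinAt)
    fun z hz => by
      have hz := interior_subset hz
      have hRz : R z * L z ≤ R x * L x := h.monotoneOn_mul (hsub hz) hx hz.2
      exact mul_nonneg (by positivity) (by linarith)
  have hlower (z : ℝ) (hz : z ∈ Ioo 0 x) : -expMoment L 1 p z ≤ D z := by
    have hLz := h.pos (hsub (Ioo_subset_Ioc_self hz))
    have hPz := h.deriv_pos z (hsub (Ioo_subset_Ioc_self hz))
    have : 0 ≤ p * L z * exp (L z / p) / P z := by positivity
    simp only [D]
    linarith
  have hlim : Tendsto (fun z => -expMoment L 1 p z) (𝓝[>] 0) (𝓝 0) := by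
    simpa using (tendsto_expMoment_zero h.continuousOn (hx.1.trans hx.2) 1 p).neg
  have hDx : 0 ≤ D x := le_of_monotoneOn_Ioc hx.1 hmono hlower hlim
  rw [mul_comm]
  exact (le_div_iff₀ (h.deriv_pos x hx)).1 (sub_nonneg.1 hDx)

lemma hasDerivAt_criticalHessian (h : IsAdmissibleExponent L P R b) {p x : ℝ} (hp : p ≠ 0)
    (hx : x ∈ Ioo 0 b) {θ : ℝ} (hθ : P x * expMoment L 1 p x = θ * (p * L x * exp (L x / p))) :
    HasDerivAt (criticalHessian L P p)
      (L x * exp (L x / p) * (p * R x * L x * θ ^ 2 + 2 * p * (1 - θ) - L x * (1 - θ) ^ 2)) x := by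
  have hL := h.hasDerivAt x hx
  have hM (n : ℕ) := hasDerivAt_expMoment_right h.continuousOn n hp hx
  refine ((((hM 2).sub ((hL.const_mul 2).mul (hM 1))).add ((hM 1).const_mul (2 * p))).add
    (((h.hasDerivAt_deriv x hx).mul ((hM 1).pow 2)).div ((h.hasDerivAt_exp_div p hx).const_mul p)
      (by positivity))).congr_deriv ?_
  have hP : P x ≠ 0 := (h.deriv_pos x hx).ne'
  have hM1 : expMoment L 1 p x = θ * (p * L x * exp (L x / p)) / P x := by
    rw [eq_div_iff hP, mul_comm, hθ]
  simp only [Pi.mul_apply, Pi.pow_apply, hM1]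
  field_simp
  push_cast
  field_simp
  ring

lemma neg_mul_expMoment_one_le_criticalHessian (h : IsAdmissibleExponent L P R b) {p x : ℝ}
    (hp : 0 < p) (hx : x ∈ Ioo 0 b) (hLp : L x ≤ 2 * p) :
    -(2 * p) * expMoment L 1 p x ≤ criticalHessian L P p x := by
  have hM1 := h.expMoment_pos 1 p hx
  have hM2 := h.expMoment_pos 2 p hx
  have hP := h.deriv_pos x hx
  have hlast : 0 ≤ P x * expMoment L 1 p x ^ 2 / (p * exp (L x / p)) := by positivity
  have hmid : L x * expMoment L 1 p x ≤ 2 * p * expMoment L 1 p x := by gcongr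
  simp only [criticalHessian]
  linarith

lemma criticalHessian_pos (h : IsAdmissibleExponent L P R b) {p x : ℝ}
    (hpx : (p, x) ∈ admissibleRegion L b) : 0 < criticalHessian L P p x := by
  obtain ⟨hp : 1 ≤ p, hx : x ∈ Ioo 0 b, hLp : L x ≤ 2 * p⟩ := hpx
  have hp0 : 0 < p := by linarith
  have hsub : Ioc 0 x ⊆ Ioo 0 b := Ioc_subset_Ioo_right hx.2
  have hLz (z : ℝ) (hz : z ∈ Ioc 0 x) : L z ≤ 2 * p :=
    (h.strictMonoOn.monotoneOn (Ioo_subset_Ico_self (hsub hz)) (Ioo_subset_Ico_self hx) hz.2).trans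
      hLp
  have hderiv (z : ℝ) (hz : z ∈ Ioo 0 b) := h.hasDerivAt_criticalHessian hp0.ne' hz
    (div_mul_cancel₀ (P z * expMoment L 1 p z)
      (by have := h.pos hz; positivity : p * L z * exp (L z / p) ≠ 0)).symm
  have hmono : StrictMonoOn (criticalHessian L P p) (Ioc 0 x) :=
    strictMonoOn_of_hasDerivWithinAt_pos (convex_Ioc 0 x)
      (fun z hz => (hderiv z (hsub hz)).continuousAt.continuousWithinAt)
      (fun z hz => (hderiv z (hsub (interior_subset hz))).hasDerivWithinAt) fun z hz => by
        have hzb := hsub (interior_subset hz)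
        have hLpos := h.pos hzb
        have hPpos := h.deriv_pos z hzb
        have hMpos := h.expMoment_pos 1 p hzb
        refine mul_pos (by positivity) (critical_quadratic_pos hLpos (hLz z (interior_subset hz)) hp
          (h.one_le z hzb) (by positivity) fun hRL => ?_)
        exact (div_le_one (by positivity)).2 (h.deriv_mul_expMoment_one_le hp0 hzb hRL)
  have hlower (z : ℝ) (hz : z ∈ Ioo 0 x) :
      -(2 * p) * expMoment L 1 p z ≤ criticalHessian L P p z :=
    have hz := Ioo_subset_Ioc_self hz
    h.neg_mul_expMoment_one_le_criticalHessian hp0 (hsub hz) (hLz z hz)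
  have hlim : Tendsto (fun z => -(2 * p) * expMoment L 1 p z) (𝓝[>] 0) (𝓝 0) := by
    simpa using (tendsto_expMoment_zero h.continuousOn (hx.1.trans hx.2) 1 p).const_mul (-(2 * p))
  exact lt_of_strictMonoOn_Ioc hx.1 hmono hlower hlim

lemma hasDerivAt_deriv_expMoment_zero_comp (h : IsAdmissibleExponent L P R b) {Q X : ℝ → ℝ}
    {Q' X' τ : ℝ} (hQ : HasDerivAt Q Q' τ) (hX : HasDerivAt X X' τ) (hXτ : X τ ∈ Ioo 0 b)
    (hQτ : Q τ ≠ 0)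
    (hcrit : X' = Q' * expMoment L 1 (Q τ) (X τ) / (Q τ ^ 2 * exp (L (X τ) / Q τ))) :
    HasDerivAt (fun τ => X' * exp (L (X τ) / Q τ) - Q' / Q τ ^ 2 * expMoment L 1 (Q τ) (X τ))
      (Q' ^ 2 / Q τ ^ 4 * criticalHessian L P (Q τ) (X τ)) τ := by
  have hexp := (((h.hasDerivAt _ hXτ).comp τ hX).div hQ hQτ).exp
  have hmoment := hasDerivAt_expMoment h.continuousOn 1 hX hQ hXτ hQτ
  refine ((hexp.const_mul X').sub
    (((hasDerivAt_const τ Q').div (hQ.pow 2) (pow_ne_zero 2 hQτ)).mul hmoment)).congr_deriv ?_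
  simp only [criticalHessian, hcrit, Pi.div_apply, Pi.pow_apply, Function.comp_apply]
  field_simp
  push_cast
  ring

lemma quasiconvexOn_expMoment_zero_comp (h : IsAdmissibleExponent L P R b) {I : Set ℝ}
    (hI : Convex ℝ I) {Q X : ℝ → ℝ} {Q' X' : ℝ} (hQ : ∀ τ, HasDerivAt Q Q' τ)
    (hX : ∀ τ, HasDerivAt X X' τ) (hne : (Q', X') ≠ 0)
    (hmem : ∀ τ ∈ I, (Q τ, X τ) ∈ admissibleRegion L b) :
    QuasiconvexOn ℝ I fun τ => expMoment L 0 (Q τ) (X τ) := by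
  have hQ0 (τ) (hτ : τ ∈ I) : Q τ ≠ 0 := (zero_lt_one.trans_le (hmem τ hτ).1).ne'
  have hderiv (τ) (hτ : τ ∈ I) : HasDerivAt (fun τ => expMoment L 0 (Q τ) (X τ))
      (X' * exp (L (X τ) / Q τ) - Q' / Q τ ^ 2 * expMoment L 1 (Q τ) (X τ)) τ := by
    simpa using hasDerivAt_expMoment h.continuousOn 0 (hX τ) (hQ τ) (hmem τ hτ).2.1 (hQ0 τ hτ)
  have hcrit (τ) (hτ : τ ∈ interior I)
      (hzero : X' * exp (L (X τ) / Q τ) - Q' / Q τ ^ 2 * expMoment L 1 (Q τ) (X τ) = 0) :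
      X' = Q' * expMoment L 1 (Q τ) (X τ) / (Q τ ^ 2 * exp (L (X τ) / Q τ)) := by
    rw [← div_div, ← div_mul_eq_mul_div, eq_div_iff (exp_ne_zero _), sub_eq_zero.1 hzero]
  refine quasiconvexOn_of_hasDerivAt2_pos hI
    (fun τ hτ => (hderiv τ hτ).continuousAt.continuousWithinAt)
    (fun τ hτ => hderiv τ (interior_subset hτ))
    (fun τ hτ hzero => h.hasDerivAt_deriv_expMoment_zero_comp (hQ τ) (hX τ)
      (hmem τ (interior_subset hτ)).2.1 (hQ0 τ (interior_subset hτ)) (hcrit τ hτ hzero))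
    fun τ hτ hzero => ?_
  have hQ' : Q' ≠ 0 := fun hQ' => hne (by simp [hcrit τ hτ hzero, hQ'])
  have := hQ0 τ (interior_subset hτ)
  have := h.criticalHessian_pos (hmem τ (interior_subset hτ))
  positivity

lemma quasiconvexOn_expMoment_zero (h : IsAdmissibleExponent L P R b) :
    QuasiconvexOn ℝ (admissibleRegion L b) fun z => expMoment L 0 z.1 z.2 := by
  refine quasiconvexOn_iff_le_max.2 ⟨h.convex_admissibleRegion,
    fun z hz w hw α β hα hβ hαβ => ?_⟩
  rcases eq_or_ne z w with rfl | hzw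
  · simp [Convex.combo_self hαβ]
  have hline (τ : ℝ) := AffineMap.hasDerivAt_lineMap (a := z) (b := w) (x := τ)
  have hquasi := h.quasiconvexOn_expMoment_zero_comp (convex_Icc 0 1) (fun τ => (hline τ).fst)
    (fun τ => (hline τ).snd) (sub_ne_zero.2 hzw.symm)
    fun τ hτ => h.convex_admissibleRegion.lineMap_mem hz hw hτ
  obtain rfl : α = 1 - β := eq_sub_of_add_eq hαβ
  have hle := (quasiconvexOn_iff_le_max.1 hquasi).2 (left_mem_Icc.2 zero_le_one)
    (right_mem_Icc.2 zero_le_one) hα hβ hαβ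
  simpa [AffineMap.lineMap_apply_module] using hle

lemma concaveOn_of_expMoment_zero_eq (h : IsAdmissibleExponent L P R b) {s : Set ℝ}
    (hs : Convex ℝ s) {g : ℝ → ℝ} {y : ℝ} (hmem : ∀ p ∈ s, (p, g p) ∈ admissibleRegion L b)
    (hg : ∀ p ∈ s, expMoment L 0 p (g p) = y) : ConcaveOn ℝ s g := by
  refine ⟨hs, fun p hp r hr α β hα hβ hαβ => ?_⟩
  have hpr := hs hp hr hα hβ hαβ
  obtain ⟨hone, hgpr, -⟩ := hmem _ hpr
  obtain ⟨hregion, hle⟩ := h.quasiconvexOn_expMoment_zero y ⟨hmem p hp, (hg p hp).le⟩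
    ⟨hmem r hr, (hg r hr).le⟩ hα hβ hαβ
  refine ((strictMonoOn_expMoment_zero h.continuousOn (zero_lt_one.trans_le hone).ne').le_iff_le
    hregion.2.1 hgpr).1 ?_
  rwa [hg _ hpr]

end IsAdmissibleExponent

lemma monotoneOn_neg_log_one_sub_div : MonotoneOn (fun v : ℝ => -log (1 - v) / v) (Ioo 0 1) := by
  intro v hv w hw hvw
  have hslope := strictConcaveOn_log_Ioi.concaveOn.slope_anti (x := 1) (mem_Ioi.2 one_pos)
  have h := hslope (a := 1 - w) (b := 1 - v) ⟨sub_pos.2 hw.2, by simp [hw.1.ne']⟩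
    ⟨sub_pos.2 hv.2, by simp [hv.1.ne']⟩ (by linarith)
  simpa [slope_def_field, neg_div, div_neg] using h

/-- The exponent `-log (1 - t ^ q)` for which `exp (logExponent q t / p)` is the integrand
`(1 - t ^ q) ^ (-1 / p)` of `arcsin_{p,q}`. -/
noncomputable def logExponent (q t : ℝ) : ℝ :=
  -log (1 - t ^ q)

section LogExponent

variable {p q x t : ℝ}

lemma continuousOn_logExponent (hq : 0 < q) : ContinuousOn (logExponent q) (Ico 0 1) := by
  refine ((continuousOn_const.sub (continuous_rpow_const hq.le).continuousOn).log
    fun t ht => ?_).neg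
  exact (sub_pos.2 (rpow_lt_one ht.1 ht.2 hq)).ne'

lemma hasDerivAt_logExponent (hq : 0 < q) (hx : x ∈ Ioo 0 1) :
    HasDerivAt (logExponent q) (q * x ^ (q - 1) / (1 - x ^ q)) x := by
  have hxq : 0 < 1 - x ^ q := sub_pos.2 (rpow_lt_one hx.1.le hx.2 hq)
  refine (((hasDerivAt_rpow_const (.inl hx.1.ne')).const_sub 1).log hxq.ne').neg.congr_deriv ?_
  ring

lemma hasDerivAt_deriv_logExponent (hq : 0 < q) (hx : x ∈ Ioo 0 1) :
    HasDerivAt (fun x => q * x ^ (q - 1) / (1 - x ^ q))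
      ((q - 1 + x ^ q) / (q * x ^ q) * (q * x ^ (q - 1) / (1 - x ^ q)) ^ 2) x := by
  have hx0 : x ≠ 0 := hx.1.ne'
  have hxq : 0 < x ^ q := rpow_pos_of_pos hx.1 q
  have hne : 1 - x ^ q ≠ 0 := (sub_pos.2 (rpow_lt_one hx.1.le hx.2 hq)).ne'
  refine (((hasDerivAt_rpow_const (.inl hx0)).const_mul q).div
    ((hasDerivAt_rpow_const (.inl hx0)).const_sub 1) hne).congr_deriv ?_
  rw [rpow_sub_one hx0 (q - 1), rpow_sub_one hx0 q]
  generalize x ^ q = v at *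
  field_simp
  ring

lemma isAdmissibleExponent_logExponent (hq : 1 ≤ q) :
    IsAdmissibleExponent (logExponent q) (fun x => q * x ^ (q - 1) / (1 - x ^ q))
      (fun x => (q - 1 + x ^ q) / (q * x ^ q)) 1 := by
  have hq0 : 0 < q := by linarith
  have hpow {x : ℝ} (hx : x ∈ Ioo 0 1) : x ^ q ∈ Ioo 0 1 :=
    ⟨rpow_pos_of_pos hx.1 q, rpow_lt_one hx.1.le hx.2 hq0⟩
  refine ⟨continuousOn_logExponent hq0, by simp [logExponent, hq0.ne'],
    fun x hx => hasDerivAt_logExponent hq0 hx, fun x hx => hasDerivAt_deriv_logExponent hq0 hx,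
    fun x hx => ?_, fun x hx => ?_, fun x hx z hz hxz => ?_⟩
  · have := rpow_pos_of_pos hx.1 (q - 1)
    have := sub_pos.2 (hpow hx).2
    positivity
  · have := (hpow hx).1
    rw [one_le_div (by positivity)]
    nlinarith [(hpow hx).2]
  · have hsplit {x : ℝ} (hx : x ∈ Ioo 0 1) : (q - 1 + x ^ q) / (q * x ^ q) * logExponent q x =
        (q - 1) / q * (logExponent q x / x ^ q) + logExponent q x / q := by
      have := (hpow hx).1
      field_simp
    have hle : x ^ q ≤ z ^ q := rpow_le_rpow hx.1.le hxz hq0.le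
    have hratio : logExponent q x / x ^ q ≤ logExponent q z / z ^ q :=
      monotoneOn_neg_log_one_sub_div (hpow hx) (hpow hz) hle
    have hmono : logExponent q x ≤ logExponent q z :=
      neg_le_neg (log_le_log (sub_pos.2 (hpow hz).2) (by linarith))
    simp only [hsplit hx, hsplit hz]
    have : 0 ≤ (q - 1) / q := div_nonneg (by linarith) hq0.le
    gcongr

lemma exp_logExponent_div (hq : 0 < q) (p : ℝ) (ht : t ∈ Ico 0 1) :
    exp (logExponent q t / p) = (1 - t ^ q) ^ (-(1 / p)) := by
  rw [rpow_def_of_pos (sub_pos.2 (rpow_lt_one ht.1 ht.2 hq)), logExponent]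
  ring_nf

lemma expMoment_logExponent_zero (hq : 0 < q) (p : ℝ) (hx : x ∈ Ico 0 1) :
    expMoment (logExponent q) 0 p x = ∫ t in (0 : ℝ)..x, (1 - t ^ q) ^ (-(1 / p)) :=
  integral_congr fun t ht => by
    rw [uIcc_of_le hx.1] at ht
    simp only [pow_zero, one_mul, exp_logExponent_div hq p ⟨ht.1, ht.2.trans_lt hx.2⟩]

lemma expMoment_logExponent_zero_le (hq : 1 ≤ q) (hp : 1 < p) (hx : x ∈ Ico 0 1) :
    expMoment (logExponent q) 0 p x ≤ p / (p - 1) := by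
  have hp0 : 0 < p := by linarith
  have hcont {q : ℝ} (hq : 0 < q) :=
    intervalIntegrable_expMoment (continuousOn_logExponent hq) 0 p hx
  have hr : -1 < -(1 / p) := neg_lt_neg ((div_lt_one hp0).2 hp)
  calc expMoment (logExponent q) 0 p x ≤ expMoment (logExponent 1) 0 p x := by
        refine integral_mono_on hx.1 (hcont (by linarith)) (hcont one_pos) fun t ht => ?_
        have ht1 : t < 1 := ht.2.trans_lt hx.2
        have : t ^ q ≤ t ^ (1 : ℝ) := rpow_le_rpow_of_exponent_ge_of_imp ht.1 ht1.le hq (by grind)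
        have : 0 < 1 - t ^ (1 : ℝ) := by simpa using ht1
        simp only [logExponent, pow_zero, one_mul]
        gcongr
    _ = (1 - (1 - x) ^ (-(1 / p) + 1)) / (-(1 / p) + 1) := by
        rw [expMoment_logExponent_zero one_pos p hx]
        simp only [rpow_one]
        rw [integral_comp_sub_left (fun u => u ^ (-(1 / p))) 1, integral_rpow (.inl hr)]
        simp only [sub_zero, one_rpow]
    _ ≤ 1 / (-(1 / p) + 1) := by
        have := rpow_nonneg (sub_nonneg.2 hx.2.le) (-(1 / p) + 1)
        gcongr <;> linarith
    _ = p / (p - 1) := by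
        have : -(1 / p) + 1 = (p - 1) / p := by field_simp; ring
        rw [this, one_div_div]

lemma le_expMoment_logExponent_zero (hq : 0 < q) (hp : 0 < p) (hx : x ∈ Ico 0 1) :
    x * (1 + x ^ q / (p * (q + 1))) ≤ expMoment (logExponent q) 0 p x := by
  have hint : IntervalIntegrable (fun t : ℝ => t ^ q / p) volume 0 x :=
    ((continuous_rpow_const hq.le).div_const p).intervalIntegrable 0 x
  calc x * (1 + x ^ q / (p * (q + 1))) = ∫ t in (0 : ℝ)..x, (1 + t ^ q / p) := by
        rw [integral_add intervalIntegrable_const hint, intervalIntegral.integral_div,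
          integral_rpow (.inl (by linarith)), rpow_add_one' hx.1 (by linarith),
          zero_rpow (by linarith)]
        simp only [intervalIntegral.integral_const, sub_zero, smul_eq_mul, mul_one]
        field_simp
    _ ≤ expMoment (logExponent q) 0 p x := by
        refine integral_mono_on hx.1 (intervalIntegrable_const.add hint)
          (intervalIntegrable_expMoment (continuousOn_logExponent hq) 0 p hx) fun t ht => ?_
        have hlog := log_le_sub_one_of_pos
          (sub_pos.2 (rpow_lt_one ht.1 (ht.2.trans_lt hx.2) hq))
        calc 1 + t ^ q / p ≤ logExponent q t / p + 1 := by
              rw [add_comm, logExponent]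
              gcongr
              linarith
          _ ≤ exp (logExponent q t / p) := add_one_le_exp _
          _ = logExponent q t ^ 0 * exp (logExponent q t / p) := by rw [pow_zero, one_mul]

lemma rpow_mul_one_add_le_one (hq : 1 ≤ q) (hp : 0 < p) (hx : 0 ≤ x)
    (h : x * (1 + x ^ q / (p * (q + 1))) ≤ 1) : x ^ q * (1 + x ^ q / (2 * p)) ≤ 1 := by
  have hq0 : 0 < q := by linarith
  have hxq : 0 ≤ x ^ q := rpow_nonneg hx q
  calc x ^ q * (1 + x ^ q / (2 * p)) ≤ x ^ q * (1 + q * (x ^ q / (p * (q + 1)))) := by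
        gcongr x ^ q * (1 + ?_)
        rw [mul_div_assoc', div_le_div_iff₀ (by positivity) (by positivity)]
        nlinarith [mul_nonneg hxq hp.le]
    _ ≤ x ^ q * (1 + x ^ q / (p * (q + 1))) ^ q := by
        gcongr
        exact one_add_mul_self_le_rpow_one_add
          (neg_one_lt_zero.le.trans (by positivity)) hq
    _ = (x * (1 + x ^ q / (p * (q + 1)))) ^ q := (mul_rpow hx (by positivity)).symm
    _ ≤ 1 := rpow_le_one (by positivity) h hq0.le

lemma neg_log_one_sub_le {v : ℝ} (hp : 1 ≤ p) (hv : v < 1) (h : v * (1 + v / (2 * p)) ≤ 1) :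
    -log (1 - v) ≤ 2 * p := by
  have hδ : 1 ≤ (1 - v) * (2 * p + 2) := by
    have : 2 * p * (v * (1 + v / (2 * p))) ≤ 2 * p * 1 := by gcongr
    field_simp at this
    nlinarith
  have hexp : 2 * p + 2 ≤ exp (2 * p) := by
    nlinarith [quadratic_le_exp_of_nonneg (x := 2 * p) (by linarith)]
  rw [neg_le, le_log_iff_exp_le (sub_pos.2 hv), exp_neg]
  exact (inv_anti₀ (by linarith) hexp).trans ((inv_le_iff_one_le_mul₀ (by linarith)).2 hδ)

lemma logExponent_le_of_expMoment_zero_le_one (hq : 1 ≤ q) (hp : 1 ≤ p) (hx : x ∈ Ico 0 1)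
    (h : expMoment (logExponent q) 0 p x ≤ 1) : logExponent q x ≤ 2 * p :=
  neg_log_one_sub_le hp (rpow_lt_one hx.1 hx.2 (by linarith)) <|
    rpow_mul_one_add_le_one hq (by linarith) hx.1 <|
      (le_expMoment_logExponent_zero (by linarith) (by linarith) hx).trans h

end LogExponent

lemma le_one_of_forall_integral_eq {q y : ℝ} (hq : 1 ≤ q) {g : ℝ → ℝ}
    (hg : ∀ p, 1 < p → g p ∈ Ioo 0 1 ∧ ∫ t in (0 : ℝ)..g p, (1 - t ^ q) ^ (-(1 / p)) = y) :
    y ≤ 1 := by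
  refine le_of_forall_pos_le_add fun ε hε => ?_
  have hp : 1 < 1 + 1 / ε := lt_add_of_pos_right 1 (by positivity)
  obtain ⟨hmem, hy⟩ := hg _ hp
  have hx := Ioo_subset_Ico_self hmem
  calc y = expMoment (logExponent q) 0 (1 + 1 / ε) (g (1 + 1 / ε)) := by
        rw [expMoment_logExponent_zero (by linarith) _ hx, hy]
    _ ≤ (1 + 1 / ε) / (1 + 1 / ε - 1) := expMoment_logExponent_zero_le hq hp hx
    _ = 1 + ε := by field_simp; ring

theorem sin_pq_concave_in_p_general {q y : ℝ} (hq : 1 ≤ q) (hy : y ≤ 1) {s : Set ℝ}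
    (hs : Convex ℝ s) (hs1 : s ⊆ Ici 1) {g : ℝ → ℝ}
    (hg : ∀ p ∈ s, g p ∈ Ioo 0 1 ∧ ∫ t in (0 : ℝ)..g p, (1 - t ^ q) ^ (-(1 / p)) = y) :
    ConcaveOn ℝ s g := by
  have hmoment (p) (hp : p ∈ s) : expMoment (logExponent q) 0 p (g p) = y := by
    rw [expMoment_logExponent_zero (by linarith) p (Ioo_subset_Ico_self (hg p hp).1), (hg p hp).2]
  refine (isAdmissibleExponent_logExponent hq).concaveOn_of_expMoment_zero_eq hs
    (fun p hp => ⟨hs1 hp, (hg p hp).1, ?_⟩) hmoment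
  exact logExponent_le_of_expMoment_zero_le_one hq (hs1 hp) (Ioo_subset_Ico_self (hg p hp).1)
    ((hmoment p hp).trans_le hy)

theorem sin_pq_concave_in_p (q y : ℝ) (hq : 1 < q) (hy : 0 < y) (g : ℝ → ℝ)
    (hg : ∀ p : ℝ, 1 < p → g p ∈ Set.Ioo (0:ℝ) 1 ∧
      (∫ t in (0:ℝ)..g p, (1 - t ^ q) ^ (-(1 / p))) = y) :
    ConcaveOn ℝ (Set.Ioi (1:ℝ)) g :=
  sin_pq_concave_in_p_general hq.le (le_one_of_forall_integral_eq hq.le hg) (convex_Ioi 1)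
    Ioi_subset_Ici_self hg
end

section
/- Let p, q > 1, α < 2, β < 1 and 0 ≤ s ≤ 1. Then ∫_0^1 [∫_0^{s·x} (1-t^q)^{-1/p} dt] · x^{-α} (1-x^q)^{-β} dx = (s/q) · B((2-α)/q, 1-β) · ∑_{k=0}^∞ [(1/p)_k ((2-α)/q)_k (1/q)_k / (((2-α)/q + 1 - β)_k (1/q + 1)_k · k!)] s^{qk}. (That is, ∫_0^1 arcsin_{p,q}(sx) x^{-α}(1-x^q)^{-β} dx = (s/q) B((2-α)/q, 1-β) ₃F₂(1/p, (2-α)/q, 1/q; (2-α)/q+1-β, 1/q+1; s^q).) -/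
open MeasureTheory

/-- Ascending Pochhammer symbol `(a)_k = a (a+1) ⋯ (a+k-1)`. -/
noncomputable def poch (a : ℝ) (k : ℕ) : ℝ := ∏ i ∈ Finset.range k, (a + i)

/-- Euler's beta function `B(a,b) = Γ(a)Γ(b)/Γ(a+b)`. -/
noncomputable def betaR (a b : ℝ) : ℝ := Real.Gamma a * Real.Gamma b / Real.Gamma (a + b)

/-! Integrating the binomial series of `(1 - t ^ q) ^ (-a)` gives the expansion of the generalized
arcsine in powers `y ^ (q * k + 1)`. Against the weight `x ^ (-α) * (1 - x ^ q) ^ (-β)` each power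
integrates, after the substitution `x ^ q ↦ x`, to a beta value whose first argument is
`(2 - α) / q + k`; the shift by `k` turns it into a ratio of Pochhammer symbols. The interchange of
sum and integral needs absolute convergence, which follows from Euler's limit formula for `Γ`:
`(a)_k / k!` grows like `k ^ (a - 1)` and `B(c + k, b)` decays like `k ^ (-b)`. -/

open Set Filter Asymptotics
open scoped Nat Topology

lemma poch_succ (a : ℝ) (k : ℕ) : poch a (k + 1) = poch a k * (a + k) :=
  Finset.prod_range_succ _ _

lemma poch_eq_ascPochhammer_eval (a : ℝ) (k : ℕ) : poch a k = (ascPochhammer ℝ k).eval a := by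
  induction k with
  | zero => simp [poch]
  | succ k ih => rw [poch_succ, ih, ascPochhammer_succ_eval]

lemma poch_pos {a : ℝ} (ha : 0 < a) (k : ℕ) : 0 < poch a k :=
  Finset.prod_pos fun _ _ => by positivity

lemma poch_mul_add_natCast (a : ℝ) (k : ℕ) : poch a k * (a + k) = a * poch (a + 1) k := by
  rw [← poch_succ, poch, Finset.prod_range_succ', poch, mul_comm]
  push_cast
  simp only [add_zero, add_assoc, add_comm (1 : ℝ)]

lemma Gamma_add_natCast {a : ℝ} (ha : 0 < a) (k : ℕ) :
    Real.Gamma (a + k) = poch a k * Real.Gamma a := by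
  induction k with
  | zero => simp [poch]
  | succ k ih =>
    rw [Nat.cast_succ, ← add_assoc, Real.Gamma_add_one (by positivity), ih, poch_succ]
    ring

lemma choose_add_sub_one_eq_poch_div_factorial (a : ℝ) (k : ℕ) :
    Ring.choose (a + k - 1) k = poch a k / k ! := by
  rw [← Ring.multichoose_eq, eq_div_iff (by positivity), poch_eq_ascPochhammer_eval,
    ← Polynomial.ascPochhammer_smeval_eq_eval, ← Ring.factorial_nsmul_multichoose_eq_ascPochhammer,
    nsmul_eq_mul, mul_comm]

lemma hasSum_one_sub_rpow_neg (a : ℝ) {x : ℝ} (hx : |x| < 1) :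
    HasSum (fun k : ℕ => poch a k / k ! * x ^ k) ((1 - x) ^ (-a)) := by
  have hball : x ∈ Metric.eball (0 : ℝ) 1 := by
    simpa [enorm_eq_nnnorm, ← NNReal.coe_lt_coe] using hx
  have hseries := (Real.one_div_one_sub_rpow_hasFPowerSeriesOnBall_zero a).hasSum hball
  simpa only [zero_add, FormalMultilinearSeries.ofScalars_apply_eq,
    choose_add_sub_one_eq_poch_div_factorial, smul_eq_mul, one_div,
    ← Real.rpow_neg (sub_nonneg.2 (abs_lt.1 hx).2.le)] using hseries

/-- The limit is `0` at the poles of `Γ`, where Lean sets `Γ a = 0`. -/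
lemma tendsto_poch_div_factorial_mul_rpow (a : ℝ) :
    Tendsto (fun k : ℕ => poch a k / (k ! * (k : ℝ) ^ (a - 1))) atTop (𝓝 (Real.Gamma a)⁻¹) := by
  by_cases hpole : Real.Gamma a = 0
  · obtain ⟨m, rfl⟩ := (Real.Gamma_eq_zero_iff a).1 hpole
    refine tendsto_const_nhds.congr' ?_
    filter_upwards [eventually_gt_atTop m] with k hk
    rw [hpole, inv_zero, poch, Finset.prod_eq_zero (Finset.mem_range.2 hk) (by simp), zero_div]
  · have hratio : Tendsto (fun k : ℕ => (k : ℝ) / (k + a)) atTop (𝓝 1) :=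
      tendsto_natCast_div_add_atTop a
    have hlim := ((Real.GammaSeq_tendsto_Gamma a).inv₀ hpole).mul hratio
    rw [mul_one] at hlim
    refine hlim.congr' ?_
    filter_upwards [eventually_gt_atTop 0, eventually_gt_atTop ⌈-a⌉₊] with k hk hka
    have hk : (0 : ℝ) < k := Nat.cast_pos.2 hk
    have hka : (k : ℝ) + a ≠ 0 := by linarith [Nat.lt_of_ceil_lt hka]
    rw [Real.GammaSeq, ← poch, poch_succ, Real.rpow_sub_one hk.ne', add_comm a]
    field_simp

lemma poch_div_factorial_isBigO (a : ℝ) :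
    (fun k : ℕ => poch a k / k !) =O[atTop] fun k : ℕ => (k : ℝ) ^ (a - 1) := by
  refine isBigO_of_div_tendsto_nhds ?_ _
    ((tendsto_poch_div_factorial_mul_rpow a).congr fun k => (div_div _ _ _).symm)
  filter_upwards [eventually_gt_atTop 0] with k hk hzero
  exact absurd hzero (Real.rpow_pos_of_pos (Nat.cast_pos.2 hk) _).ne'

lemma betaR_pos {a b : ℝ} (ha : 0 < a) (hb : 0 < b) : 0 < betaR a b :=
  ProbabilityTheory.beta_pos ha hb

lemma betaR_add_natCast {a b : ℝ} (ha : 0 < a) (hab : 0 < a + b) (k : ℕ) :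
    betaR (a + k) b = betaR a b * (poch a k / poch (a + b) k) := by
  have hpoch := (poch_pos hab k).ne'
  have hGamma := (Real.Gamma_pos_of_pos hab).ne'
  rw [betaR, betaR, add_right_comm, Gamma_add_natCast ha, Gamma_add_natCast hab]
  field_simp [hpoch, hGamma]

lemma betaR_add_natCast_isBigO {a b : ℝ} (ha : 0 < a) (hab : 0 < a + b) :
    (fun k : ℕ => betaR (a + k) b) =O[atTop] fun k : ℕ => (k : ℝ) ^ (-b) := by
  have hlim := ((tendsto_poch_div_factorial_mul_rpow a).div
    (tendsto_poch_div_factorial_mul_rpow (a + b))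
    (inv_ne_zero (Real.Gamma_pos_of_pos hab).ne')).const_mul (betaR a b)
  have hpow : ∀ᶠ k : ℕ in atTop, (0 : ℝ) < (k : ℝ) ^ (-b) := by
    filter_upwards [eventually_gt_atTop 0] with k hk
    exact Real.rpow_pos_of_pos (Nat.cast_pos.2 hk) _
  refine isBigO_of_div_tendsto_nhds (hpow.mono fun k hk hzero => absurd hzero hk.ne') _
    (hlim.congr' ?_)
  filter_upwards [eventually_gt_atTop 0] with k hk
  have hk : (0 : ℝ) < k := Nat.cast_pos.2 hk
  have hpoch := poch_pos hab k
  rw [Pi.div_apply, Pi.div_apply, betaR_add_natCast ha hab,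
    show a - 1 = (a + b - 1) + -b by ring, Real.rpow_add hk]
  field_simp

lemma integral_rpow_mul_one_sub_rpow {a b : ℝ} (ha : 0 < a) (hb : 0 < b) :
    ∫ x in Ioo (0 : ℝ) 1, x ^ (a - 1) * (1 - x) ^ (b - 1) = betaR a b := by
  have hcomplex : ((∫ x in Ioo (0 : ℝ) 1, x ^ (a - 1) * (1 - x) ^ (b - 1) : ℝ) : ℂ)
      = Complex.betaIntegral a b := by
    rw [← integral_complex_ofReal, Complex.betaIntegral,
      intervalIntegral.integral_of_le zero_le_one, integral_Ioc_eq_integral_Ioo]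
    refine setIntegral_congr_fun measurableSet_Ioo fun x hx => ?_
    simp only [Complex.ofReal_mul, Complex.ofReal_cpow hx.1.le,
      Complex.ofReal_cpow (sub_nonneg.2 hx.2.le), Complex.ofReal_sub, Complex.ofReal_one]
  rw [← Complex.ofReal_re (∫ x in Ioo (0 : ℝ) 1, _), hcomplex]
  exact (ProbabilityTheory.beta_eq_betaIntegralReal a b ha hb).symm

lemma image_rpow_Ioo_zero_one {q : ℝ} (hq : 0 < q) :
    (fun x : ℝ => x ^ q) '' Ioo 0 1 = Ioo 0 1 := by
  refine Subset.antisymm ?_ fun y hy => ?_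
  · rintro _ ⟨x, hx, rfl⟩
    exact ⟨Real.rpow_pos_of_pos hx.1 q, Real.rpow_lt_one hx.1.le hx.2 hq⟩
  · exact ⟨y ^ q⁻¹, ⟨Real.rpow_pos_of_pos hy.1 _, Real.rpow_lt_one hy.1.le hy.2 (inv_pos.2 hq)⟩,
      Real.rpow_inv_rpow hy.1.le hq.ne'⟩

lemma integral_comp_rpow_Ioo_zero_one {E : Type*} [NormedAddCommGroup E] [NormedSpace ℝ E]
    (g : ℝ → E) {q : ℝ} (hq : 0 < q) :
    ∫ x in Ioo (0 : ℝ) 1, (q * x ^ (q - 1)) • g (x ^ q) = ∫ x in Ioo (0 : ℝ) 1, g x := by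
  have hderiv : ∀ x ∈ Ioo (0 : ℝ) 1,
      HasDerivWithinAt (fun x : ℝ => x ^ q) (q * x ^ (q - 1)) (Ioo 0 1) x := fun x hx =>
    (Real.hasDerivAt_rpow_const (Or.inl hx.1.ne')).hasDerivWithinAt
  have hinj : InjOn (fun x : ℝ => x ^ q) (Ioo 0 1) := fun x hx y hy =>
    (Real.rpow_left_inj hx.1.le hy.1.le hq.ne').1
  have hchange := integral_image_eq_integral_abs_deriv_smul measurableSet_Ioo hderiv hinj g
  rw [image_rpow_Ioo_zero_one hq] at hchange
  rw [hchange]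
  refine setIntegral_congr_fun measurableSet_Ioo fun x hx => ?_
  have hx0 := hx.1
  simp only [abs_of_pos (show 0 < q * x ^ (q - 1) by positivity)]

lemma integral_rpow_mul_one_sub_rpow_rpow {q c b : ℝ} (hq : 0 < q) (hc : 0 < c) (hb : 0 < b) :
    ∫ x in Ioo (0 : ℝ) 1, x ^ (c - 1) * (1 - x ^ q) ^ (b - 1) = betaR (c / q) b / q := by
  rw [eq_div_iff hq.ne', ← integral_rpow_mul_one_sub_rpow (div_pos hc hq) hb,
    ← integral_comp_rpow_Ioo_zero_one (fun y => y ^ (c / q - 1) * (1 - y) ^ (b - 1)) hq,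
    ← integral_mul_const]
  refine setIntegral_congr_fun measurableSet_Ioo fun x hx => ?_
  have hexp : x ^ (c - 1) = x ^ (q - 1) * (x ^ q) ^ (c / q - 1) := by
    rw [← Real.rpow_mul hx.1.le, ← Real.rpow_add hx.1]
    congr 1
    field_simp
    ring
  simp only [hexp, smul_eq_mul]
  ring

lemma integrableOn_rpow_mul_one_sub_rpow_rpow {q c b : ℝ} (hq : 0 < q) (hc : 0 < c) (hb : 0 < b) :
    IntegrableOn (fun x : ℝ => x ^ (c - 1) * (1 - x ^ q) ^ (b - 1)) (Ioo 0 1) := by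
  refine Integrable.of_integral_ne_zero ?_
  rw [integral_rpow_mul_one_sub_rpow_rpow hq hc hb]
  exact (div_pos (betaR_pos (div_pos hc hq) hb) hq).ne'

/-- Termwise integration is justified by absolute convergence: the `k`-th term has a constant sign,
so its `L¹` norm is again a beta value. -/
lemma hasSum_integral_mul_rpow_mul_one_sub_rpow_rpow {q r c b : ℝ} (hq : 0 < q) (hrc : 0 < r + c)
    (hb : 0 < b) {u : ℕ → ℝ} {f : ℝ → ℝ}
    (hf : ∀ x ∈ Ioo (0 : ℝ) 1, HasSum (fun k : ℕ => u k * x ^ (q * k + r)) (f x))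
    (hu : Summable fun k : ℕ => u k * betaR ((r + c) / q + k) b) :
    HasSum (fun k : ℕ => u k * betaR ((r + c) / q + k) b / q)
      (∫ x in (0 : ℝ)..1, f x * x ^ (c - 1) * (1 - x ^ q) ^ (b - 1)) := by
  set w : ℕ → ℝ → ℝ := fun k x => x ^ (q * k + (r + c) - 1) * (1 - x ^ q) ^ (b - 1) with hw
  have hc (k : ℕ) : 0 < q * k + (r + c) := by positivity
  have hw_int (k : ℕ) : ∫ x in Ioo (0 : ℝ) 1, w k x = betaR ((r + c) / q + k) b / q := by
    rw [integral_rpow_mul_one_sub_rpow_rpow hq (hc k) hb, add_div,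
      mul_div_cancel_left₀ _ hq.ne', add_comm (k : ℝ)]
  have hw_nonneg (k : ℕ) : ∀ x ∈ Ioo (0 : ℝ) 1, 0 ≤ w k x := fun x hx =>
    mul_nonneg (Real.rpow_nonneg hx.1.le _)
      (Real.rpow_nonneg (sub_nonneg.2 (Real.rpow_lt_one hx.1.le hx.2 hq).le) _)
  have hnorm (k : ℕ) :
      ∫ x in Ioo (0 : ℝ) 1, ‖u k * w k x‖ = |u k * betaR ((r + c) / q + k) b| / q := by
    have hbeta := betaR_pos (a := (r + c) / q + k) (by positivity) hb
    rw [setIntegral_congr_fun measurableSet_Ioo fun x hx => by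
      rw [norm_mul, Real.norm_of_nonneg (hw_nonneg k x hx)], integral_const_mul, hw_int,
      abs_mul, abs_of_pos hbeta, Real.norm_eq_abs, mul_div_assoc]
  have hsum := hasSum_integral_of_summable_integral_norm (F := fun k x => u k * w k x)
    (fun k => (integrableOn_rpow_mul_one_sub_rpow_rpow hq (hc k) hb).const_mul (u k))
    (by simpa only [hnorm] using hu.abs.div_const q)
  simp only [integral_const_mul, hw_int, ← mul_div_assoc] at hsum
  convert! hsum using 1
  rw [intervalIntegral.integral_of_le zero_le_one, integral_Ioc_eq_integral_Ioo]
  refine setIntegral_congr_fun measurableSet_Ioo fun x hx => ?_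
  simp only [mul_assoc]
  rw [← ((hf x hx).mul_right _).tsum_eq]
  refine tsum_congr fun k => ?_
  have hpow : x ^ (q * k + (r + c) - 1) = x ^ (q * k + r) * x ^ (c - 1) := by
    rw [← Real.rpow_add hx.1, ← add_assoc, add_sub_assoc]
  simp only [hw, hpow, mul_assoc]

/-- The coefficient of `y ^ (q * k + 1)` in the expansion at `0` of the generalized arcsine
`∫ t in 0..y, (1 - t ^ q) ^ (-a)`; the paper's `arcsin_{p,q}` is the case `a = 1 / p`. -/
noncomputable def arcsinCoeff (a q : ℝ) (k : ℕ) : ℝ := poch a k / k ! / (q * k + 1)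

lemma hasSum_arcsinCoeff_mul_rpow (a : ℝ) {q y : ℝ} (hq : 0 < q) (hy : y ∈ Ico (0 : ℝ) 1) :
    HasSum (fun k : ℕ => arcsinCoeff a q k * y ^ (q * k + 1))
      (∫ t in (0 : ℝ)..y, (1 - t ^ q) ^ (-a)) := by
  have hbinom : ∀ t ∈ Ico (0 : ℝ) 1,
      HasSum (fun k : ℕ => poch a k / k ! * t ^ (q * k)) ((1 - t ^ q) ^ (-a)) := fun t ht => by
    have htq : |t ^ q| < 1 := by
      rw [abs_of_nonneg (Real.rpow_nonneg ht.1 q)]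
      exact Real.rpow_lt_one ht.1 ht.2 hq
    simpa only [Real.rpow_mul ht.1, Real.rpow_natCast] using hasSum_one_sub_rpow_neg a htq
  have hterm (k : ℕ) : ∫ t in (0 : ℝ)..y, poch a k / k ! * t ^ (q * k)
      = arcsinCoeff a q k * y ^ (q * k + 1) := by
    have hqk : 0 ≤ q * k := by positivity
    rw [intervalIntegral.integral_const_mul, integral_rpow (Or.inl (by linarith)),
      Real.zero_rpow (by positivity), arcsinCoeff]
    ring
  simp only [← hterm]
  refine intervalIntegral.hasSum_integral_of_dominated_convergence
    (fun k _ => |poch a k / k ! * y ^ (q * k)|)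
    (fun k => Measurable.aestronglyMeasurable (by fun_prop))
    (fun k => .of_forall fun t ht => ?_)
    (.of_forall fun _ _ => (hbinom y hy).summable.abs) intervalIntegrable_const
    (.of_forall fun t ht => ?_)
  all_goals rw [uIoc_of_le hy.1] at ht
  · have hpow : t ^ (q * k) ≤ y ^ (q * k) := Real.rpow_le_rpow ht.1.le ht.2 (by positivity)
    rw [Real.norm_eq_abs, abs_mul, abs_mul, abs_of_nonneg (Real.rpow_nonneg ht.1.le _),
      abs_of_nonneg (Real.rpow_nonneg hy.1 _)]
    gcongr
  · exact hbinom t ⟨ht.1.le, ht.2.trans_lt hy.2⟩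

lemma arcsinCoeff_isBigO (a : ℝ) {q : ℝ} (hq : 0 < q) :
    arcsinCoeff a q =O[atTop] fun k : ℕ => (k : ℝ) ^ (a - 2) := by
  have hinv : (fun k : ℕ => (q * k + 1)⁻¹) =O[atTop] fun k : ℕ => (k : ℝ)⁻¹ := by
    refine .of_bound q⁻¹ ?_
    filter_upwards [eventually_gt_atTop 0] with k hk
    have hqk : 0 < q * k := mul_pos hq (Nat.cast_pos.2 hk)
    rw [Real.norm_of_nonneg (by positivity), Real.norm_of_nonneg (by positivity), ← mul_inv]
    exact inv_anti₀ hqk (by linarith)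
  refine ((poch_div_factorial_isBigO a).mul hinv).congr' (.of_forall fun k => rfl) ?_
  filter_upwards [eventually_gt_atTop 0] with k hk
  have hk : (k : ℝ) ≠ 0 := Nat.cast_ne_zero.2 hk.ne'
  rw [← div_eq_mul_inv, ← Real.rpow_sub_one hk, sub_sub, one_add_one_eq_two]

lemma summable_arcsinCoeff_mul_rpow_mul_betaR {a q c b s : ℝ} (hq : 0 < q) (hc : 0 < c)
    (hb : 0 < b) (hs : s ∈ Icc (0 : ℝ) 1) (hs_one : s = 1 → a < 1 + b) :
    Summable fun k : ℕ => arcsinCoeff a q k * s ^ (q * k + 1) * betaR (c + k) b := by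
  have hbeta := betaR_add_natCast_isBigO hc (add_pos hc hb)
  rcases hs.2.eq_or_lt with rfl | hs_lt
  · refine summable_of_isBigO_nat (Real.summable_nat_rpow.2 (?_ : a - 2 + -b < -1)) ?_
    · linarith [hs_one rfl]
    · refine ((arcsinCoeff_isBigO a hq).mul hbeta).congr'
        (.of_forall fun k => by simp only [Real.one_rpow, mul_one]) ?_
      filter_upwards [eventually_gt_atTop 0] with k hk
      rw [Real.rpow_add (Nat.cast_pos.2 hk)]
  · have hbounded : (fun k : ℕ => betaR (c + k) b) =O[atTop] fun _ => (1 : ℝ) :=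
      hbeta.trans (((tendsto_rpow_neg_atTop hb).comp tendsto_natCast_atTop_atTop).isBigO_one ℝ)
    refine summable_of_isBigO_nat
      (hasSum_arcsinCoeff_mul_rpow a hq ⟨hs.1, hs_lt⟩).summable ?_
    simpa only [mul_one] using (isBigO_refl _ atTop).mul hbounded

lemma arcsinCoeff_mul_betaR {q c b : ℝ} (a : ℝ) (hq : 0 < q) (hc : 0 < c) (hcb : 0 < c + b)
    (k : ℕ) :
    arcsinCoeff a q k * betaR (c + k) b = betaR c b *
      (poch a k * poch c k * poch (1 / q) k / (poch (c + b) k * poch (1 / q + 1) k * k !)) := by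
  have hshift : poch (1 / q) k * (q * k + 1) = poch (1 / q + 1) k := by
    rw [← mul_right_inj' (one_div_ne_zero hq.ne'), ← poch_mul_add_natCast]
    field_simp
    ring
  have hcbpoch := poch_pos hcb k
  have hqpoch := poch_pos (one_div_pos.2 hq) k
  rw [arcsinCoeff, betaR_add_natCast hc hcb, ← hshift]
  field_simp

/-- At `s = 1` the `k`-th term is of order `k ^ (a + β - 3)`, whence the condition `a + β < 2`. -/
theorem arcsin_pq_integral_general (a q α β s : ℝ) (hq : 0 < q) (hα : α < 2) (hβ : β < 1)
    (hs : s ∈ Icc (0 : ℝ) 1) (hs_one : s = 1 → a + β < 2) :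
    HasSum
      (fun k : ℕ => s / q * betaR ((2 - α) / q) (1 - β) *
        (poch a k * poch ((2 - α) / q) k * poch (1 / q) k /
          (poch ((2 - α) / q + 1 - β) k * poch (1 / q + 1) k * k !) * s ^ (q * (k : ℝ))))
      (∫ x in (0 : ℝ)..1,
        (∫ t in (0 : ℝ)..(s * x), (1 - t ^ q) ^ (-a)) * x ^ (-α) * (1 - x ^ q) ^ (-β)) := by
  have hc : 0 < (2 - α) / q := div_pos (sub_pos.2 hα) hq
  have hb : 0 < 1 - β := sub_pos.2 hβ
  have hexp : 1 + (1 - α) = 2 - α := by ring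
  have hseries : ∀ x ∈ Ioo (0 : ℝ) 1,
      HasSum (fun k : ℕ => arcsinCoeff a q k * s ^ (q * k + 1) * x ^ (q * k + 1))
        (∫ t in (0 : ℝ)..(s * x), (1 - t ^ q) ^ (-a)) := fun x hx => by
    simpa only [Real.mul_rpow hs.1 hx.1.le, mul_assoc] using hasSum_arcsinCoeff_mul_rpow a hq
      ⟨mul_nonneg hs.1 hx.1.le, (mul_le_of_le_one_left hx.1.le hs.2).trans_lt hx.2⟩
  have hsummable := summable_arcsinCoeff_mul_rpow_mul_betaR (a := a) hq hc hb hs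
    fun h => by linarith [hs_one h]
  have hintegral := hasSum_integral_mul_rpow_mul_one_sub_rpow_rpow hq
    (hexp ▸ sub_pos.2 hα) hb hseries (hexp ▸ hsummable)
  simp only [hexp, sub_sub_cancel_left] at hintegral
  refine hintegral.congr_fun fun k => ?_
  rw [add_sub_assoc, mul_right_comm (arcsinCoeff a q k),
    arcsinCoeff_mul_betaR a hq hc (add_pos hc hb), Real.rpow_add_one' hs.1 (by positivity)]
  ring

theorem arcsin_pq_integral (p q α β s : ℝ) (hp : 1 < p) (hq : 1 < q)
    (hα : α < 2) (hβ : β < 1) (hs : s ∈ Set.Icc (0:ℝ) 1) :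
    (∫ x in (0:ℝ)..1,
        (∫ t in (0:ℝ)..(s * x), (1 - t ^ q) ^ (-(1 / p))) * x ^ (-α) * (1 - x ^ q) ^ (-β)) =
      (s / q) * betaR ((2 - α) / q) (1 - β) *
        ∑' k : ℕ, poch (1 / p) k * poch ((2 - α) / q) k * poch (1 / q) k /
          (poch ((2 - α) / q + 1 - β) k * poch (1 / q + 1) k * (Nat.factorial k : ℝ)) *
            s ^ (q * (k : ℝ)) := by
  have hp_inv : 1 / p < 1 := (div_lt_one (zero_lt_one.trans hp)).2 hp
  rw [← tsum_mul_left, (arcsin_pq_integral_general (1 / p) q α β s (zero_lt_one.trans hq) hα hβ hs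
    fun _ => by linarith).tsum_eq]
end
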